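/- There exists a constant c > 0 such that for infinitely many natural numbers n there exist a finite connected simple graph G on n vertices with maximum degree at most 3 and a walk w on G following the LFV-e policy whose cover time is at least c·n². (In particular, the least-frequently-visited-edge strategy can take time quadratic in n to explore a graph of maximum degree 3, such as the dual graph of a triangulation of a polygonal region.) -/

import Mathlib

/-!
The graph is a chain of triangles: triangle `i` has the vertices `3i + 1` (its hub), `3i + 2` (its
tip) and `3i + 3` (its port), and a bridge joins its hub to the previous port `3i`. On entering a
fresh triangle through the bridge, the walk may go round the three sides once; all four edges at
hand have then been crossed once, so it may leave by the bridge it came from. This sends it back to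
the start, and the `k`-th excursion gets only as far as triangle `k`. When triangle `K` is reached,
bridge `i` has been crossed at least `2 (K - i)` times, which already amounts to `K ^ 2` steps.

On each later visit to a triangle the walk crosses the side hub–port on its way out, and on its
way back makes five steps, port–tip–hub–port–tip–hub, so that every excursion adds two crossings to
each edge of the triangle and the situation repeats.
-/

section LFVWalk

variable {V W : Type*}

/-- The traversal count `efreq_w(e, t)`: how often `w` crosses the edge `e` before time `t`. -/
noncomputable def edgeFreq (w : ℕ → V) (e : Sym2 V) (t : ℕ) : ℕ :=
  {t' : ℕ | t' < t ∧ s(w t', w (t' + 1)) = e}.ncard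

/-- Walks in `G` that always leave along a least frequently visited edge (the LFV-e policy). -/
structure IsLFVWalk (G : SimpleGraph V) (w : ℕ → V) : Prop where
  adj (t : ℕ) : G.Adj (w t) (w (t + 1))
  edgeFreq_le (t : ℕ) (u : V) :
    G.Adj (w t) u → edgeFreq w s(w t, w (t + 1)) t ≤ edgeFreq w s(w t, u) t

lemma edgeFreq_eq_count [DecidableEq V] (w : ℕ → V) (e : Sym2 V) (t : ℕ) :
    edgeFreq w e t = Nat.count (fun t' ↦ s(w t', w (t' + 1)) = e) t := by
  rw [Nat.count_eq_card_filter_range, ← Set.ncard_coe_finset]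
  simp [edgeFreq]

@[simp]
lemma edgeFreq_zero (w : ℕ → V) (e : Sym2 V) : edgeFreq w e 0 = 0 := by
  simp [edgeFreq]

lemma edgeFreq_succ [DecidableEq V] (w : ℕ → V) (e : Sym2 V) (t : ℕ) :
    edgeFreq w e (t + 1) = edgeFreq w e t + if s(w t, w (t + 1)) = e then 1 else 0 := by
  simp only [edgeFreq_eq_count, Nat.count_succ]

lemma sum_edgeFreq_le (w : ℕ → V) (S : Finset (Sym2 V)) (t : ℕ) :
    ∑ e ∈ S, edgeFreq w e t ≤ t := by
  classical
  induction t with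
  | zero => simp
  | succ t ih =>
    simp only [edgeFreq_succ, Finset.sum_add_distrib, Finset.sum_ite_eq]
    gcongr
    split_ifs <;> simp

lemma edgeFreq_comp {f : W → V} (hf : f.Injective) (w : ℕ → W) (e : Sym2 W) (t : ℕ) :
    edgeFreq (f ∘ w) (e.map f) t = edgeFreq w e t := by
  simp only [edgeFreq, Function.comp_apply, ← Sym2.map_mk, (Sym2.map.injective hf).eq_iff]

lemma IsLFVWalk.comap {G : SimpleGraph V} {f : W → V} (hf : f.Injective) {w : ℕ → W}
    (h : IsLFVWalk G (f ∘ w)) : IsLFVWalk (G.comap f) w where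
  adj := h.adj
  edgeFreq_le t u hu := by
    rw [← edgeFreq_comp hf, ← edgeFreq_comp hf]
    exact h.edgeFreq_le t (f u) hu

end LFVWalk

/-- The four edges of a cell of the chain: the bridge leading to the hub of a triangle, and the
three sides of the triangle. -/
inductive CellEdge
  | bridge
  | hubPort
  | portTip
  | tipHub
deriving DecidableEq

namespace CellEdge

/-- The edge `c` of cell `i`, as a pair of vertices: the port of cell `i` is `3 * i + 3`, which is
also where the bridge of cell `i + 1` starts. -/
def ends : CellEdge → ℕ → Sym2 ℕ
  | bridge, i => s(3 * i, 3 * i + 1)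
  | hubPort, i => s(3 * i + 1, 3 * i + 3)
  | portTip, i => s(3 * i + 3, 3 * i + 2)
  | tipHub, i => s(3 * i + 2, 3 * i + 1)

lemma ends_inj {c c' : CellEdge} {i i' : ℕ} : c.ends i = c'.ends i' ↔ c = c' ∧ i = i' := by
  cases c <;> cases c' <;> simp [ends] <;> omega

lemma not_isDiag_ends (c : CellEdge) (i : ℕ) : ¬ (c.ends i).IsDiag := by
  cases c <;> simp [ends]

/-- The edge crossed on leg `q` of a visit to a cell; see `TourState`. -/
def ofLeg : Fin 8 → CellEdge
  | 0 | 7 => bridge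
  | 1 | 4 => hubPort
  | 2 | 5 => portTip
  | 3 | 6 => tipHub

/-- How often the edge has been crossed after `d` complete visits to its cell and the first `q` legs
of the next visit. The truncated `- 1` accounts for the first visit, which skips legs `2`, `3`, `4`
and so crosses every side of the triangle only once. -/
def crossings (c : CellEdge) (d : ℕ) (q : Fin 8) : ℕ :=
  match c with
  | bridge => 2 * d + if 1 ≤ q then 1 else 0
  | hubPort => 2 * d + (if 2 ≤ q then 1 else 0) + (if 5 ≤ q then 1 else 0) - 1
  | portTip => 2 * d + (if 3 ≤ q then 1 else 0) + (if 6 ≤ q then 1 else 0) - 1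
  | tipHub => 2 * d + (if 4 ≤ q then 1 else 0) + (if 7 ≤ q then 1 else 0) - 1

lemma crossings_succ {d : ℕ} {q : Fin 8} (hd : 1 ≤ q → q ≤ 4 → 0 < d) (c : CellEdge) :
    c.crossings (if q = 7 then d + 1 else d) (q + 1) =
      c.crossings d q + if ofLeg q = c then 1 else 0 := by
  fin_cases q <;> cases c <;> grind [crossings, ofLeg]

lemma crossings_zero_five (c : CellEdge) :
    c.crossings 0 5 = c.crossings 0 1 + if ofLeg 1 = c then 1 else 0 := by
  cases c <;> rfl

end CellEdge

/-- The chain of the cells `0, …, K`; the vertices beyond the last port `3 * K + 3` are isolated. -/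
def triangleChain (K : ℕ) : SimpleGraph ℕ :=
  .fromEdgeSet {e | ∃ c : CellEdge, ∃ i ≤ K, e = c.ends i}

lemma triangleChain_adj {K u v : ℕ} :
    (triangleChain K).Adj u v ↔ ∃ c : CellEdge, ∃ i ≤ K, s(u, v) = c.ends i := by
  simp only [triangleChain, SimpleGraph.fromEdgeSet_adj, Set.mem_ofPred_eq, and_iff_left_iff_imp]
  rintro ⟨c, i, -, h⟩ rfl
  exact c.not_isDiag_ends i (h ▸ rfl)

lemma triangleChain_adj_succ {K u : ℕ} (hu : u < 3 * K + 3) : (triangleChain K).Adj u (u + 1) := by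
  rw [triangleChain_adj]
  obtain ⟨i, rfl | rfl | rfl⟩ : ∃ i, u = 3 * i ∨ u = 3 * i + 1 ∨ u = 3 * i + 2 := ⟨u / 3, by omega⟩
  · exact ⟨.bridge, i, by omega, rfl⟩
  · exact ⟨.tipHub, i, by omega, Sym2.eq_swap⟩
  · exact ⟨.portTip, i, by omega, Sym2.eq_swap⟩

lemma triangleChain_comap_connected (K : ℕ) :
    ((triangleChain K).comap (Fin.val : Fin (3 * K + 4) → ℕ)).Connected := by
  refine (SimpleGraph.pathGraph_connected (3 * K + 3)).mono fun u v huv ↦ ?_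
  rw [SimpleGraph.comap_adj]
  rcases SimpleGraph.pathGraph_adj.mp huv with h | h <;> rw [← h]
  · exact triangleChain_adj_succ (by omega)
  · exact (triangleChain_adj_succ (by omega)).symm

lemma neighborSet_triangleChain_subset (K v : ℕ) : (triangleChain K).neighborSet v ⊆
    ({v - 1, v + 1, if v % 3 = 1 then v + 2 else v - 2} : Finset ℕ) := by
  intro u hu
  obtain ⟨c, i, -, h⟩ := triangleChain_adj.mp hu
  cases c <;> grind [CellEdge.ends]

lemma ncard_neighborSet_triangleChain_comap_le (K : ℕ) {W : Type*} {f : W → ℕ}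
    (hf : f.Injective) (v : W) : (((triangleChain K).comap f).neighborSet v).ncard ≤ 3 := by
  have card_le := Set.ncard_le_ncard_of_injOn f
    (fun u hu ↦ neighborSet_triangleChain_subset K (f v) hu) hf.injOn (Finset.finite_toSet _)
  rw [Set.ncard_coe_finset] at card_le
  exact card_le.trans Finset.card_le_three

/-- A moment of the tour: the walk is on excursion number `phase` from the vertex `0`, in cell
`cell`, about to start on leg `leg` of its visit to this cell. Legs `0` and `1` lead outwards, from
the previous port over the hub to the port; the remaining legs lead back. -/
structure TourState where
  phase : ℕ
  cell : ℕ
  leg : Fin 8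

namespace TourState

variable {K : ℕ} {s : TourState}

/-- The vertex at which the walk stands. -/
def position (s : TourState) : ℕ :=
  match s.leg with
  | 0 => 3 * s.cell
  | 1 | 4 | 7 => 3 * s.cell + 1
  | 3 | 6 => 3 * s.cell + 2
  | 2 | 5 => 3 * s.cell + 3

/-- The state in which the tour begins. -/
def start : TourState :=
  ⟨0, 0, 0⟩

/-- The next state of the tour of the cells `0, …, K`. After leg `1` the walk stays in the cell if
it is fresh, skipping three legs, or if it is the last one. -/
def step (K : ℕ) : TourState → TourState
  | ⟨k, j, 1⟩ => if j = k then ⟨k, j, 5⟩ else if j = K then ⟨k, j, 2⟩ else ⟨k, j + 1, 0⟩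
  | ⟨k, j, 7⟩ => if j = 0 then ⟨k + 1, 0, 0⟩ else ⟨k, j - 1, 2⟩
  | ⟨k, j, q⟩ => ⟨k, j, q + 1⟩

/-- The states that occur on the tour: excursion `k` turns round in cell `k`, where it skips legs
`2`, `3`, `4`. -/
structure Valid (K : ℕ) (s : TourState) : Prop where
  cell_le : s.cell ≤ K
  cell_le_phase : s.cell ≤ s.phase
  cell_lt_phase : 2 ≤ s.leg → s.leg ≤ 4 → s.cell < s.phase

/-- The number of complete visits to cell `i`. On the way back the cells beyond the current one have
completed a visit in the current excursion. -/
def visits (s : TourState) (i : ℕ) : ℕ :=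
  if s.cell < i ∧ 2 ≤ s.leg then s.phase + 1 - i else s.phase - i

/-- The next leg to be made in cell `i`: the visits to the cells before the current one are
interrupted after leg `1`, those to the cells beyond it have not begun. -/
def legAt (s : TourState) (i : ℕ) : Fin 8 :=
  if i < s.cell then 2 else if s.cell < i then 0 else s.leg

/-- How often the edge `c` of cell `i` has been crossed. -/
def crossings (s : TourState) (c : CellEdge) (i : ℕ) : ℕ :=
  c.crossings (s.visits i) (s.legAt i)

lemma crossings_start (c : CellEdge) (i : ℕ) : start.crossings c i = 0 := by
  cases c <;> grind [crossings, start, visits, legAt, CellEdge.crossings]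

lemma Valid.step (h : s.Valid K) : (s.step K).Valid K := by
  obtain ⟨k, j, q⟩ := s
  obtain ⟨h₁, h₂, h₃⟩ := h
  fin_cases q <;> constructor <;> grind [TourState.step]

lemma ends_position_step (K : ℕ) (s : TourState) :
    s(s.position, (s.step K).position) = (CellEdge.ofLeg s.leg).ends s.cell := by
  obtain ⟨k, j, q⟩ := s
  fin_cases q <;> grind [TourState.step, position, CellEdge.ofLeg, CellEdge.ends]

lemma visits_step_of_ne {i : ℕ} (hi : i ≤ K) (hne : i ≠ s.cell) :
    (s.step K).visits i = s.visits i := by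
  obtain ⟨k, j, q⟩ := s
  fin_cases q <;> grind [TourState.step, visits]

lemma legAt_step_of_ne (K : ℕ) {i : ℕ} (hne : i ≠ s.cell) :
    (s.step K).legAt i = s.legAt i := by
  obtain ⟨k, j, q⟩ := s
  fin_cases q <;> grind [TourState.step, legAt]

lemma Valid.visits_step_self (h : s.Valid K) :
    (s.step K).visits s.cell = if s.leg = 7 then s.visits s.cell + 1 else s.visits s.cell := by
  have cell_le_phase := h.cell_le_phase
  obtain ⟨k, j, q⟩ := s
  fin_cases q <;> grind [TourState.step, visits]

lemma legAt_step_self (K : ℕ) (s : TourState) : (s.step K).legAt s.cell =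
    if s.leg = 1 ∧ s.cell = s.phase then 5 else s.leg + 1 := by
  obtain ⟨k, j, q⟩ := s
  fin_cases q <;> grind [TourState.step, legAt]

lemma visits_cell (s : TourState) : s.visits s.cell = s.phase - s.cell := by
  simp [visits]

lemma legAt_cell (s : TourState) : s.legAt s.cell = s.leg := by
  simp [legAt]

lemma Valid.crossings_step_self (h : s.Valid K) (c : CellEdge) :
    (s.step K).crossings c s.cell = s.crossings c s.cell +
      if CellEdge.ofLeg s.leg = c then 1 else 0 := by
  simp only [crossings, h.visits_step_self, legAt_step_self, visits_cell, legAt_cell]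
  by_cases fresh : s.leg = 1 ∧ s.cell = s.phase
  · simp [fresh, CellEdge.crossings_zero_five]
  · rw [if_neg fresh, CellEdge.crossings_succ]
    have := h.cell_le_phase
    have := h.cell_lt_phase
    grind

lemma Valid.crossings_step (h : s.Valid K) {i : ℕ} (hi : i ≤ K) (c : CellEdge) :
    (s.step K).crossings c i = s.crossings c i +
      if s(s.position, (s.step K).position) = c.ends i then 1 else 0 := by
  simp only [ends_position_step, CellEdge.ends_inj]
  rcases eq_or_ne i s.cell with rfl | hne
  · simpa using h.crossings_step_self c
  · simp [crossings, visits_step_of_ne hi hne, legAt_step_of_ne K hne, hne.symm]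

lemma crossings_ofLeg_le_same_cell {c : CellEdge} (hc : s.position ∈ c.ends s.cell) :
    s.crossings (CellEdge.ofLeg s.leg) s.cell ≤ s.crossings c s.cell := by
  simp only [crossings, visits_cell, legAt_cell]
  obtain ⟨k, j, q⟩ := s
  fin_cases q <;> cases c <;>
    grind [CellEdge.crossings, CellEdge.ofLeg, CellEdge.ends, position]

lemma leg_eq_zero_of_mem_ends {c : CellEdge} {i : ℕ} (hi : i < s.cell)
    (hc : s.position ∈ c.ends i) : s.leg = 0 ∧ s.cell = i + 1 ∧ c ≠ .bridge := by
  obtain ⟨k, j, q⟩ := s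
  fin_cases q <;> cases c <;> grind [CellEdge.ends, position]

lemma leg_eq_two_or_five_of_mem_ends {c : CellEdge} {i : ℕ} (hi : s.cell < i)
    (hc : s.position ∈ c.ends i) : (s.leg = 2 ∨ s.leg = 5) ∧ i = s.cell + 1 ∧ c = .bridge := by
  obtain ⟨k, j, q⟩ := s
  fin_cases q <;> cases c <;> grind [CellEdge.ends, position]

lemma crossings_ofLeg_le_of_mem {c : CellEdge} {i : ℕ} (hc : s.position ∈ c.ends i) :
    s.crossings (CellEdge.ofLeg s.leg) s.cell ≤ s.crossings c i := by
  rcases lt_trichotomy i s.cell with hi | rfl | hi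
  · obtain ⟨leg_eq, cell_eq, c_ne⟩ := leg_eq_zero_of_mem_ends hi hc
    calc s.crossings (CellEdge.ofLeg s.leg) s.cell = 2 * (s.phase - s.cell) := by
          simp [crossings, visits_cell, legAt_cell, leg_eq, CellEdge.ofLeg, CellEdge.crossings]
      _ ≤ 2 * (s.phase - i) - 1 := by omega
      _ ≤ s.crossings c i := by
        cases c <;> grind [crossings, CellEdge.crossings, visits]
  · exact crossings_ofLeg_le_same_cell hc
  · obtain ⟨leg_eq, rfl, rfl⟩ := leg_eq_two_or_five_of_mem_ends hi hc
    calc s.crossings (CellEdge.ofLeg s.leg) s.cell ≤ 2 * (s.phase - s.cell) := by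
          rcases leg_eq with leg_eq | leg_eq <;>
            simp [crossings, visits_cell, legAt_cell, leg_eq, CellEdge.ofLeg, CellEdge.crossings]
      _ = s.crossings .bridge (s.cell + 1) := by
        rcases leg_eq with leg_eq | leg_eq <;>
          simp [crossings, CellEdge.crossings, visits, legAt, leg_eq]

end TourState

open TourState

/-- The state of the tour of the cells `0, …, K` at time `t`. -/
def tour (K t : ℕ) : TourState :=
  (step K)^[t] start

lemma tour_zero (K : ℕ) : tour K 0 = start :=
  rfl

lemma tour_succ (K t : ℕ) : tour K (t + 1) = (tour K t).step K :=
  Function.iterate_succ_apply' ..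

lemma tour_valid (K t : ℕ) : (tour K t).Valid K := by
  induction t with
  | zero => constructor <;> simp [tour_zero, start]
  | succ t ih => exact tour_succ K t ▸ ih.step

/-- The vertex visited at time `t`. -/
def tourWalk (K t : ℕ) : ℕ :=
  (tour K t).position

lemma edgeFreq_tourWalk {K i : ℕ} (hi : i ≤ K) (c : CellEdge) (t : ℕ) :
    edgeFreq (tourWalk K) (c.ends i) t = (tour K t).crossings c i := by
  induction t with
  | zero => rw [edgeFreq_zero, tour_zero, crossings_start]
  | succ t ih =>
    simp only [edgeFreq_succ, ih, tourWalk, tour_succ, (tour_valid K t).crossings_step hi]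

lemma tourWalk_edge (K t : ℕ) : s(tourWalk K t, tourWalk K (t + 1)) =
    (CellEdge.ofLeg (tour K t).leg).ends (tour K t).cell := by
  simp only [tourWalk, tour_succ, ends_position_step]

lemma isLFVWalk_tourWalk (K : ℕ) : IsLFVWalk (triangleChain K) (tourWalk K) where
  adj t := triangleChain_adj.mpr ⟨_, _, (tour_valid K t).cell_le, tourWalk_edge K t⟩
  edgeFreq_le t u hu := by
    obtain ⟨c, i, hi, h⟩ := triangleChain_adj.mp hu
    rw [tourWalk_edge, h, edgeFreq_tourWalk (tour_valid K t).cell_le, edgeFreq_tourWalk hi]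
    exact crossings_ofLeg_le_of_mem (h ▸ Sym2.mem_mk_left _ _)

lemma tourWalk_lt (K t : ℕ) : tourWalk K t < 3 * K + 4 := by
  have := (tour_valid K t).cell_le
  grind [tourWalk, position]

lemma le_phase_of_tourWalk_eq {K t : ℕ} (h : tourWalk K t = 3 * K + 3) : K ≤ (tour K t).phase := by
  have := (tour_valid K t).cell_le
  have := (tour_valid K t).cell_le_phase
  grind [tourWalk, position]

lemma two_mul_phase_sub_le_crossings_bridge (s : TourState) (i : ℕ) :
    2 * (s.phase - i) ≤ s.crossings .bridge i := by
  grind [crossings, visits, CellEdge.crossings]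

lemma sq_le_sum_range_two_mul_sub (K : ℕ) : K ^ 2 ≤ ∑ i ∈ Finset.range K, 2 * (K - i) := by
  induction K with
  | zero => simp
  | succ K ih =>
    rw [Finset.sum_range_succ']
    simp only [Nat.add_sub_add_right]
    grind

lemma sq_le_of_le_phase {K t : ℕ} (h : K ≤ (tour K t).phase) : K ^ 2 ≤ t := by
  have ends_injective : Function.Injective CellEdge.bridge.ends := fun i j hij ↦
    (CellEdge.ends_inj.mp hij).2
  calc K ^ 2 ≤ ∑ i ∈ Finset.range K, 2 * (K - i) := sq_le_sum_range_two_mul_sub K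
    _ ≤ ∑ i ∈ Finset.range K, edgeFreq (tourWalk K) (CellEdge.bridge.ends i) t := by
      gcongr with i hi
      rw [edgeFreq_tourWalk (Finset.mem_range_le hi)]
      grw [h]
      exact two_mul_phase_sub_le_crossings_bridge _ i
    _ = ∑ e ∈ (Finset.range K).map ⟨_, ends_injective⟩, edgeFreq (tourWalk K) e t := by
      rw [Finset.sum_map]; rfl
    _ ≤ t := sum_edgeFreq_le _ _ t

/-- There is a constant `c > 0` such that for infinitely many `n` there is a connected
simple graph on `n` vertices of maximum degree at most `3` and a walk following the
LFV-e (least-frequently-visited edge) policy whose cover time is at least `c * n ^ 2`. -/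
theorem lfv_e_quadratic_lower_bound :
    ∃ c : ℝ, 0 < c ∧
      ∀ N : ℕ, ∃ n : ℕ, N ≤ n ∧
        ∃ G : SimpleGraph (Fin n),
          G.Connected ∧
          (∀ v : Fin n, {u : Fin n | G.Adj v u}.ncard ≤ 3) ∧
          ∃ w : ℕ → Fin n,
            -- `w` is a walk on `G`
            (∀ t : ℕ, G.Adj (w t) (w (t + 1))) ∧
            -- `w` follows the LFV-e policy
            (∀ t : ℕ, ∀ u : Fin n, G.Adj (w t) u →
              {t' : ℕ | t' < t ∧ s(w t', w (t' + 1)) = s(w t, w (t + 1))}.ncard ≤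
                {t' : ℕ | t' < t ∧ s(w t', w (t' + 1)) = s(w t, u)}.ncard) ∧
            -- the cover time of `w` is at least `c * n ^ 2`
            ∃ v : Fin n, ∀ t : ℕ, (t : ℝ) < c * (n : ℝ) ^ 2 → w t ≠ v := by
  refine ⟨1 / 49, by norm_num, fun N ↦ ?_⟩
  set K := N + 1
  let w : ℕ → Fin (3 * K + 4) := fun t ↦ ⟨tourWalk K t, tourWalk_lt K t⟩
  have lfv : IsLFVWalk ((triangleChain K).comap Fin.val) w :=
    .comap Fin.val_injective (isLFVWalk_tourWalk K)
  refine ⟨3 * K + 4, by omega, _, triangleChain_comap_connected K,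
    ncard_neighborSet_triangleChain_comap_le K Fin.val_injective, w, lfv.adj, lfv.edgeFreq_le,
    Fin.last _, fun t ht hw ↦ ht.not_ge ?_⟩
  have late : K ^ 2 ≤ t := sq_le_of_le_phase (le_phase_of_tourWalk_eq (congrArg Fin.val hw))
  have n_le : 3 * K + 4 ≤ 7 * K := by omega
  calc (1 / 49 : ℝ) * ((3 * K + 4 : ℕ) : ℝ) ^ 2 ≤ 1 / 49 * ((7 * K : ℕ) : ℝ) ^ 2 := by gcongr
    _ = ((K ^ 2 : ℕ) : ℝ) := by push_cast; ring
    _ ≤ (t : ℝ) := by exact_mod_cast late
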